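/- arXiv:2312.00650 — 3 statements merged into one kernel-verified Lean document; each statement's English description precedes it below -/
import Mathlib

section
/- Let G and H be gamegraphs, and suppose there exist option preserving maps α : G → H and β : H → G. Then both α and β are source preserving, i.e., α maps the starting position of G to the starting position of H and β maps the starting position of H to the starting position of G. -/
/-- The set of options (out-neighbors) of a vertex `p` in the digraph with arrow
relation `E`. -/
def OptSet {V : Type*} (E : V → V → Prop) (p : V) : Set V := {q | E p q}

/-- A digraph has no infinite directed walk (i.e. it is a rulegraph). -/
def NoInfiniteWalk {V : Type*} (E : V → V → Prop) : Prop :=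
  ¬ ∃ f : ℕ → V, ∀ n, E (f n) (f (n + 1))

/-- A map `α` between digraphs is option preserving if `Opt (α p) = α '' Opt p`
for every vertex `p`. -/
def OptionPreserving {V W : Type*} (E : V → V → Prop) (F : W → W → Prop)
    (α : V → W) : Prop :=
  ∀ p, OptSet F (α p) = α '' OptSet E p

/-- A source is a vertex with no in-neighbors. -/
def IsSource {V : Type*} (E : V → V → Prop) (s : V) : Prop := ∀ q, ¬ E q s

/-- A gamegraph is a rulegraph with a unique source `s` (the starting position)
such that every vertex is a subposition of `s`. -/
def IsGamegraph {V : Type*} (E : V → V → Prop) (s : V) : Prop :=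
  NoInfiniteWalk E ∧ IsSource E s ∧ (∀ t, IsSource E t → t = s) ∧
    ∀ p, Relation.ReflTransGen E s p

/-- The equivalence class of `p` under the relation `r`. -/
def cls {V : Type*} (r : V → V → Prop) (p : V) : Set V := {x | r p x}

/-- A congruence relation on a rulegraph: an equivalence relation such that
related vertices have the same set of classes of options. -/
def IsCongruence {V : Type*} (E : V → V → Prop) (r : V → V → Prop) : Prop :=
  Equivalence r ∧ ∀ p q, r p q → cls r '' OptSet E p = cls r '' OptSet E q

/-- A rulegraph is simple if its only congruence relation is equality. -/
def IsSimple {V : Type*} (E : V → V → Prop) : Prop :=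
  ∀ r : V → V → Prop, IsCongruence E r → ∀ p q, r p q → p = q

/-- The arrow relation of the quotient digraph by a setoid `s`: there is an arrow
from `[p]` to `[q]` exactly when there are `p' ∼ p` and `q' ∼ q` with `q' ∈ Opt p'`. -/
def QuotE {V : Type*} (E : V → V → Prop) (s : Setoid V) :
    Quotient s → Quotient s → Prop :=
  fun a b => ∃ p q : V, Quotient.mk s p = a ∧ Quotient.mk s q = b ∧ E p q

/-!
Option preserving maps send walks to walks. If `β sH ≠ sG`, there is a nonempty walk from `sG` to
`β sH`, and applying `β` to a walk from `sH` to `α sG` continues it to `β (α sG)`. Concatenating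
the images of the resulting walk under the iterates of `β ∘ α` gives an infinite walk. The equation
for `α` follows by exchanging `G` and `H`.
-/

theorem OptionPreserving.map_rel {V W : Type*} {E : V → V → Prop} {F : W → W → Prop}
    {α : V → W} (hα : OptionPreserving E F α) {p q : V} (h : E p q) : F (α p) (α q) :=
  (hα p).ge (Set.mem_image_of_mem α h)

namespace NoInfiniteWalk

variable {V W : Type*} {E : V → V → Prop} {F : W → W → Prop}

theorem wellFounded_swap (hE : NoInfiniteWalk E) : WellFounded (Function.swap E) :=
  wellFounded_iff_isEmpty_descending_chain.2 ⟨fun walk => hE ⟨walk.1, walk.2⟩⟩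

theorem of_relHom (hE : NoInfiniteWalk E) (β : F →r E) : NoInfiniteWalk F :=
  fun ⟨walk, hwalk⟩ => hE ⟨β ∘ walk, fun n => β.map_rel (hwalk n)⟩

theorem not_transGen_map (hE : NoInfiniteWalk E) (γ : E →r E) (p : V) :
    ¬ Relation.TransGen E p (γ p) := by
  induction p using hE.wellFounded_swap.transGen.induction with
  | _ p ih =>
    intro hp
    exact ih (γ p) (Relation.transGen_swap.2 hp) (hp.lift γ fun _ _ => γ.map_rel)

theorem map_root_eq_root (hE : NoInfiniteWalk E) {sG : V} {sH : W}
    (hsG : ∀ p, Relation.ReflTransGen E sG p) (α : E →r F) (β : F →r E)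
    (hsH : Relation.ReflTransGen F sH (α sG)) : β sH = sG := by
  have hβ : Relation.ReflTransGen E (β sH) (β (α sG)) := hsH.lift β fun _ _ => β.map_rel
  refine (Relation.reflTransGen_iff_eq_or_transGen.1 (hsG (β sH))).resolve_right fun hwalk => ?_
  exact hE.not_transGen_map (β.comp α) sG (hwalk.trans_left hβ)

end NoInfiniteWalk

theorem stmt_6_general {V W : Type*} {E : V → V → Prop} {F : W → W → Prop} {sG : V} {sH : W}
    (hE : NoInfiniteWalk E) (hsG : ∀ p, Relation.ReflTransGen E sG p)
    (hsH : ∀ q, Relation.ReflTransGen F sH q) (α : E →r F) (β : F →r E) :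
    α sG = sH ∧ β sH = sG :=
  ⟨(hE.of_relHom β).map_root_eq_root hsH β α (hsG (β sH)),
    hE.map_root_eq_root hsG α β (hsH (α sG))⟩

/-- If there are option preserving maps between gamegraphs in both directions,
then both are source preserving. -/
theorem stmt_6 {V W : Type*} (E : V → V → Prop) (F : W → W → Prop)
    (sG : V) (sH : W) (hG : IsGamegraph E sG) (hH : IsGamegraph F sH)
    (α : V → W) (β : W → V)
    (hα : OptionPreserving E F α) (hβ : OptionPreserving F E β) :
    α sG = sH ∧ β sH = sG :=
  stmt_6_general hG.1 hG.2.2.2 hH.2.2.2 ⟨α, hα.map_rel⟩ ⟨β, hβ.map_rel⟩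
end

section
/- If G is a gamegraph with starting position s and ∼ is a congruence relation on G, then the quotient rulegraph G/∼ is a gamegraph whose starting position is the class [s]: [s] is the unique source of G/∼ and every class is a subposition of [s]. -/
/-!
A congruence is exactly what makes the quotient map `Quotient.mk` option preserving, so the theorem
is an instance of the fact that a surjective option-preserving map carries gamegraphs to gamegraphs.
Arrows of the target lift along such a map, which transfers well-foundedness, and arrows of the
domain are preserved, which transfers reachability from the starting position. Nothing else has to
be transferred: in a rulegraph, a vertex from which every vertex can be reached is automatically
the unique source.
-/

section

open Relation

variable {V W : Type*} {E : V → V → Prop} {F : W → W → Prop}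

theorem noInfiniteWalk_iff_wellFounded_flip : NoInfiniteWalk E ↔ WellFounded (flip E) := by
  rw [wellFounded_iff_isEmpty_descending_chain, isEmpty_subtype, NoInfiniteWalk, not_exists]
  rfl

theorem NoInfiniteWalk.not_transGen_self (hE : NoInfiniteWalk E) (p : V) : ¬ TransGen E p p :=
  fun hcycle => (noInfiniteWalk_iff_wellFounded_flip.1 hE).transGen.irrefl.irrefl p hcycle.swap

theorem IsSource.eq_of_reflTransGen {s t : V} (ht : IsSource E t) (hst : ReflTransGen E s t) :
    t = s :=
  hst.cases_tail.resolve_right fun ⟨q, _, hqt⟩ => ht q hqt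

theorem isGamegraph_iff {s : V} :
    IsGamegraph E s ↔ NoInfiniteWalk E ∧ ∀ p, ReflTransGen E s p := by
  refine ⟨fun ⟨hwalk, _, _, hreach⟩ => ⟨hwalk, hreach⟩, fun ⟨hwalk, hreach⟩ => ?_⟩
  have hsource : IsSource E s := fun q hqs => hwalk.not_transGen_self s (.tail' (hreach q) hqs)
  exact ⟨hwalk, hsource, fun t ht => ht.eq_of_reflTransGen (hreach t), hreach⟩

theorem NoInfiniteWalk.of_fibration {α : V → W} (hE : NoInfiniteWalk E)
    (hα : Fibration (flip E) (flip F) α) (hsurj : α.Surjective) : NoInfiniteWalk F := by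
  rw [noInfiniteWalk_iff_wellFounded_flip] at hE ⊢
  exact ⟨hsurj.forall.2 fun p => (hE.apply p).of_fibration α hα⟩

namespace OptionPreserving

variable {α : V → W}

theorem map_rel_s11 (hα : OptionPreserving E F α) {p q : V} (hpq : E p q) : F (α p) (α q) :=
  (hα p).superset (Set.mem_image_of_mem α hpq)

theorem fibration (hα : OptionPreserving E F α) : Fibration (flip E) (flip F) α :=
  fun p _ hb => (hα p).subset hb

theorem isGamegraph {s : V} (hα : OptionPreserving E F α) (hsurj : α.Surjective)
    (hE : IsGamegraph E s) : IsGamegraph F (α s) := by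
  obtain ⟨hwalk, hreach⟩ := isGamegraph_iff.1 hE
  have hreach_map : ∀ p, ReflTransGen F (α s) (α p) :=
    fun p => (hreach p).lift α fun _ _ => hα.map_rel_s11
  exact isGamegraph_iff.2 ⟨hwalk.of_fibration hα.fibration hsurj, hsurj.forall.2 hreach_map⟩

end OptionPreserving

theorem IsCongruence.optionPreserving_mk {sd : Setoid V} (hsd : IsCongruence E sd.r) :
    OptionPreserving E (QuotE E sd) (Quotient.mk sd) := by
  refine fun p => Set.Subset.antisymm ?_ ?_
  · rintro _ ⟨p', q', hp, rfl, hE⟩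
    have hcls : cls sd.r q' ∈ cls sd.r '' OptSet E p :=
      hsd.2 p' p (Quotient.exact hp) ▸ Set.mem_image_of_mem _ hE
    obtain ⟨q, hq, hqq'⟩ := hcls
    have hrel : sd.r q q' := hqq'.superset (sd.refl q')
    exact ⟨q, hq, Quotient.sound hrel⟩
  · rintro _ ⟨q, hq, rfl⟩
    exact ⟨p, q, rfl, rfl, hq⟩

end

/-- The quotient of a gamegraph by a congruence relation is a gamegraph whose
starting position is the class of the starting position. -/
theorem stmt_11 {V : Type*} (E : V → V → Prop) (s : V)
    (hG : IsGamegraph E s) (sd : Setoid V) (hcong : IsCongruence E sd.r) :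
    IsGamegraph (QuotE E sd) (Quotient.mk sd s) :=
  hcong.optionPreserving_mk.isGamegraph Quotient.mk_surjective hG
end

section
/- (Fourth Isomorphism Theorem for rulegraphs) Let R be a rulegraph and D a congruence relation on R. Then the map sending a congruence relation C on R that contains D to the relation C/D on the quotient rulegraph R/D (defined by [p] (C/D) [q] ↔ p C q) is an order isomorphism between the lattice { C ∈ Con(R) | D ⊆ C } of congruence relations on R containing D and the lattice Con(R/D) of congruence relations on R/D, both ordered by inclusion. -/
/-! An equivalence relation is a congruence exactly when it is a simulation of the arrow relation by
itself. A surjective option-preserving map `α` lifts and projects arrows, so pulling back and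
pushing forward along `α` preserve the simulation property, and these operations are mutually
inverse between the congruences containing the kernel of `α` and those on the target. The
projection to the quotient by `D` is such a map, with kernel `D`. -/

open Function

section Congruence

variable {V : Type*} {E r : V → V → Prop}

theorem cls_eq_cls_iff (hr : Equivalence r) {p q : V} : cls r p = cls r q ↔ r p q where
  mp h := show q ∈ cls r p from h ▸ hr.refl q
  mpr h := Set.ext fun _ => ⟨hr.trans (hr.symm h), hr.trans h⟩

theorem cls_mem_image_optSet_iff (hr : Equivalence r) {p' q : V} :
    cls r p' ∈ cls r '' OptSet E q ↔ ∃ q', E q q' ∧ r p' q' :=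
  exists_congr fun _ => and_congr_right fun _ => eq_comm.trans (cls_eq_cls_iff hr)

theorem isCongruence_iff_simulation :
    IsCongruence E r ↔
      Equivalence r ∧ ∀ ⦃p q p'⦄, r p q → E p p' → ∃ q', E q q' ∧ r p' q' := by
  refine and_congr_right fun hr => ⟨fun h p q p' hpq hp => ?_, fun h p q hpq => ?_⟩
  · exact (cls_mem_image_optSet_iff hr).1 (h p q hpq ▸ Set.mem_image_of_mem _ hp)
  · have image_subset {p q : V} (hpq : r p q) : cls r '' OptSet E p ⊆ cls r '' OptSet E q :=
      Set.image_subset_iff.2 fun _ hp => (cls_mem_image_optSet_iff hr).2 (h hpq hp)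
    exact (image_subset hpq).antisymm (image_subset (hr.symm hpq))

end Congruence

section OptionPreserving

variable {V W : Type*} {E : V → V → Prop} {F : W → W → Prop} {α : V → W}

theorem OptionPreserving.rel_apply_iff (hα : OptionPreserving E F α) {p : V} {b : W} :
    F (α p) b ↔ ∃ q, E p q ∧ α q = b :=
  Set.ext_iff.1 (hα p) b

theorem onFun_map_eq_of_ker_le {C : V → V → Prop} (hC : Equivalence C)
    (hker : ∀ p q, α p = α q → C p q) : (Relation.Map C α α on α) = C := by
  ext p q
  refine ⟨?_, Relation.le_onFun_map α p q⟩
  rintro ⟨p', q', h, hp, hq⟩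
  exact hC.trans (hker p p' hp.symm) (hC.trans h (hker q' q hq))

theorem IsCongruence.onFun (hα : OptionPreserving E F α) {C : W → W → Prop}
    (hC : IsCongruence F C) : IsCongruence E (C on α) := by
  obtain ⟨hequiv, hsim⟩ := isCongruence_iff_simulation.1 hC
  refine isCongruence_iff_simulation.2 ⟨hequiv.comap α, fun p q p' hpq hp => ?_⟩
  obtain ⟨b, hb, hp'b⟩ := hsim hpq (hα.rel_apply_iff.2 ⟨p', hp, rfl⟩)
  obtain ⟨q', hq, rfl⟩ := hα.rel_apply_iff.1 hb
  exact ⟨q', hq, hp'b⟩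

theorem IsCongruence.map (hα : OptionPreserving E F α) (hsurj : Surjective α)
    {C : V → V → Prop} (hC : IsCongruence E C) (hker : ∀ p q, α p = α q → C p q) :
    IsCongruence F (Relation.Map C α α) := by
  obtain ⟨hequiv, hsim⟩ := isCongruence_iff_simulation.1 hC
  refine isCongruence_iff_simulation.2 ⟨Relation.map_equivalence hequiv α hsurj hker, ?_⟩
  rintro _ _ _ ⟨p, q, hpq, rfl, rfl⟩ hp
  obtain ⟨p', hp', rfl⟩ := hα.rel_apply_iff.1 hp
  obtain ⟨q', hq', h⟩ := hsim hpq hp'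
  exact ⟨α q', hα.rel_apply_iff.2 ⟨q', hq', rfl⟩, p', q', h, rfl, rfl⟩

/-- The correspondence between the congruence relations containing the kernel of a surjective
option-preserving map `α` and the congruence relations on its target, by direct and inverse image.
The kernel is given as a relation `D` equivalent to `α p = α q`, so that `D` can be a setoid
relation when `α` is a quotient map. -/
def OptionPreserving.congruenceOrderIso (hα : OptionPreserving E F α) (hsurj : Surjective α)
    {D : V → V → Prop} (hD : ∀ p q, α p = α q ↔ D p q) :
    {C : V → V → Prop // IsCongruence E C ∧ ∀ p q, D p q → C p q} ≃o
      {C' : W → W → Prop // IsCongruence F C'} :=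
  Equiv.toOrderIso
    { toFun C := ⟨Relation.Map C.1 α α,
        C.2.1.map hα hsurj fun p q h => C.2.2 p q ((hD p q).1 h)⟩
      invFun C' := ⟨C'.1 on α, C'.2.onFun hα, fun p q h =>
        show C'.1 (α p) (α q) from (hD p q).2 h ▸ C'.2.1.refl (α p)⟩
      left_inv C := Subtype.ext <|
        onFun_map_eq_of_ker_le C.2.1.1 fun p q h => C.2.2 p q ((hD p q).1 h)
      right_inv _ := Subtype.ext <| Relation.map_onFun_eq_of_surjective hsurj }
    (fun _ _ h => Relation.map_mono h)
    (fun _ _ h _ _ => h _ _)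

theorem OptionPreserving.congruenceOrderIso_apply_iff (hα : OptionPreserving E F α)
    (hsurj : Surjective α) {D : V → V → Prop} (hD : ∀ p q, α p = α q ↔ D p q)
    (C : {C : V → V → Prop // IsCongruence E C ∧ ∀ p q, D p q → C p q}) (p q : V) :
    (hα.congruenceOrderIso hsurj hD C).1 (α p) (α q) ↔ C.1 p q :=
  have symm_apply := (hα.congruenceOrderIso hsurj hD).symm_apply_apply C
  iff_of_eq (congrFun₂ (congrArg Subtype.val symm_apply) p q)

end OptionPreserving

theorem IsCongruence.optionPreserving_mk_s19 {V : Type*} {E : V → V → Prop} {D : Setoid V}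
    (hD : IsCongruence E D.r) : OptionPreserving E (QuotE E D) (Quotient.mk D) := by
  refine fun p => Set.Subset.antisymm ?_ ?_
  · rintro _ ⟨p₀, q₀, hp, rfl, hE⟩
    obtain ⟨q, hq, hq₀q⟩ := (isCongruence_iff_simulation.1 hD).2 (Quotient.exact hp) hE
    exact ⟨q, hq, (Quotient.sound hq₀q).symm⟩
  · rintro _ ⟨q, hq, rfl⟩
    exact ⟨p, q, rfl, rfl, hq⟩

theorem stmt_19_general {V : Type*} (E : V → V → Prop) (D : Setoid V)
    (hD : IsCongruence E D.r) :
    ∃ φ : {C : V → V → Prop // IsCongruence E C ∧ ∀ p q, D.r p q → C p q} ≃o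
          {C' : Quotient D → Quotient D → Prop // IsCongruence (QuotE E D) C'},
      ∀ (C : {C : V → V → Prop // IsCongruence E C ∧ ∀ p q, D.r p q → C p q})
        (p q : V),
        (φ C).1 (Quotient.mk D p) (Quotient.mk D q) ↔ C.1 p q :=
  have mk_preserving := hD.optionPreserving_mk_s19
  have mk_surjective : Surjective (Quotient.mk D) := Quotient.mk_surjective
  have ker_mk (p q : V) : Quotient.mk D p = Quotient.mk D q ↔ D.r p q := Quotient.eq
  ⟨mk_preserving.congruenceOrderIso mk_surjective ker_mk,
    mk_preserving.congruenceOrderIso_apply_iff mk_surjective ker_mk⟩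

/-- Fourth Isomorphism Theorem for rulegraphs: for a congruence relation `D` on
a rulegraph `R`, the map `C ↦ C/D` is an order isomorphism between the lattice
of congruence relations on `R` containing `D` and the lattice of congruence
relations on `R/D`. -/
theorem stmt_19 {V : Type*} (E : V → V → Prop) (hR : NoInfiniteWalk E)
    (D : Setoid V) (hD : IsCongruence E D.r) :
    ∃ φ : {C : V → V → Prop // IsCongruence E C ∧ ∀ p q, D.r p q → C p q} ≃o
          {C' : Quotient D → Quotient D → Prop // IsCongruence (QuotE E D) C'},
      ∀ (C : {C : V → V → Prop // IsCongruence E C ∧ ∀ p q, D.r p q → C p q})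
        (p q : V),
        (φ C).1 (Quotient.mk D p) (Quotient.mk D q) ↔ C.1 p q :=
  stmt_19_general E D hD
end
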